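/- arXiv:1610.05033 — 2 statements merged into one kernel-verified Lean document; each statement's English description precedes it below -/
import Mathlib

section
/- Let R = k[X,Y]/(F), and let R₁ = R/(z₁R) and R₃₄ = R/(z₃z₄R) (quotients by the images of z₁ = Y and z₃z₄ = (X−Y)(X−λY)). Then the R-module Ext¹_R(R₁, R₃₄) is a 2-dimensional k-vector space. -/
open CategoryTheory

/-! Since `F = z₁ * (z₂ z₃ z₄)` with both factors nonzero, each factor generates the annihilator of
the other in `R = k[X,Y] ⧸ (F)`. Hence `R₁ = R ⧸ (z₁)` has the 2-periodic free resolution with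
differentials alternating between `z₁` and `z₂ z₃ z₄`. The second of these kills `R₃₄`, so every odd
`Ext` group of `R₁` with values in `R₃₄` is `R₃₄ ⧸ z₁ R₃₄ ≅ k[X,Y] ⧸ (z₁, z₃ z₄)`. Setting `Y = 0`
turns this into `k[X] ⧸ (X ^ 2)`.
-/

universe u

lemma smul_id_comp_mkQ {R : Type u} [CommRing R] (a : R) :
    (a • 𝟙 (ModuleCat.of R R)) ≫ ModuleCat.ofHom (Ideal.span {a}).mkQ = 0 := by
  rw [Linear.smul_comp, Category.id_comp]
  refine ModuleCat.hom_ext (LinearMap.ext_ring ((Submodule.Quotient.mk_eq_zero _).2 ?_))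
  exact Ideal.mem_span_singleton.2 (dvd_mul_right a 1)

/-- Two elements `a`, `b` of a commutative ring form an exact pair of zero divisors if each
generates the annihilator of the other. -/
structure IsExactPair {R : Type*} [CommRing R] (a b : R) : Prop where
  left_mul_eq_zero_iff (x : R) : a * x = 0 ↔ b ∣ x
  right_mul_eq_zero_iff (x : R) : b * x = 0 ↔ a ∣ x

namespace IsExactPair

variable {R : Type u} [CommRing R] {a b : R}

lemma symm (h : IsExactPair a b) : IsExactPair b a :=
  ⟨h.right_mul_eq_zero_iff, h.left_mul_eq_zero_iff⟩

lemma mul_eq_zero (h : IsExactPair a b) : a * b = 0 :=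
  (h.left_mul_eq_zero_iff b).2 dvd_rfl

lemma smul_id_comp_smul_id (h : IsExactPair a b) :
    (a • 𝟙 (ModuleCat.of R R)) ≫ (b • 𝟙 (ModuleCat.of R R)) = 0 := by
  simp [smul_smul, mul_comm b a, h.mul_eq_zero]

lemma exact_smul_id (h : IsExactPair a b) :
    (ShortComplex.mk _ _ h.smul_id_comp_smul_id).Exact := by
  rw [ShortComplex.moduleCat_exact_iff]
  intro x hx
  obtain ⟨y, hy⟩ := (h.right_mul_eq_zero_iff x).1 hx
  exact ⟨y, hy.symm⟩

/-- The periodic complex `⋯ ⟶ R ⟶ R ⟶ R ⟶ R` attached to an exact pair: the differential into degree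
`n` is multiplication by `a` if `n` is even and by `b` if `n` is odd. -/
noncomputable def chainComplex (h : IsExactPair a b) : ChainComplex (ModuleCat.{u} R) ℕ :=
  HomologicalComplex.alternatingConst (ModuleCat.of R R)
    h.symm.smul_id_comp_smul_id h.smul_id_comp_smul_id fun _ _ ↦ ComplexShape.down_nat_odd_add

lemma chainComplex_d_of_even (h : IsExactPair a b) {n : ℕ} (hn : Even n) :
    h.chainComplex.d (n + 1) n = a • 𝟙 (ModuleCat.of R R) := by
  simp [chainComplex, HomologicalComplex.alternatingConst, hn, Nat.even_add_one]

lemma chainComplex_d_of_odd (h : IsExactPair a b) {n : ℕ} (hn : Odd n) :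
    h.chainComplex.d (n + 1) n = b • 𝟙 (ModuleCat.of R R) := by
  simp [chainComplex, HomologicalComplex.alternatingConst, hn]

lemma chainComplex_exactAt_succ (h : IsExactPair a b) (n : ℕ) :
    h.chainComplex.ExactAt (n + 1) := by
  rw [HomologicalComplex.exactAt_iff' _ (n + 2) (n + 1) n (by simp) (by simp)]
  rcases (n + 1).even_or_odd with hn | hn
  · exact ShortComplex.exact_of_iso (HomologicalComplex.alternatingConstScIsoEven
      _ _ _ _ (by simp) (by simp) hn).symm h.exact_smul_id
  · exact ShortComplex.exact_of_iso (HomologicalComplex.alternatingConstScIsoOdd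
      _ _ _ _ (by simp) (by simp) hn).symm h.symm.exact_smul_id

/-- The augmentation of the periodic complex, induced by the projection `R ⟶ R ⧸ (a)`. -/
noncomputable def augmentation (h : IsExactPair a b) : h.chainComplex ⟶
    (ChainComplex.single₀ _).obj (ModuleCat.of R (R ⧸ Ideal.span {a})) :=
  (h.chainComplex.toSingle₀Equiv _).symm ⟨_, by
    rw [h.chainComplex_d_of_even .zero]
    exact smul_id_comp_mkQ a⟩

lemma quasiIso_augmentation (h : IsExactPair a b) : QuasiIso h.augmentation where
  quasiIsoAt
    | 0 => by
      rw [ChainComplex.quasiIsoAt₀_iff, ShortComplex.quasiIso_iff_of_zeros' _ rfl rfl rfl]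
      refine ⟨(ShortComplex.moduleCat_exact_iff _).2 fun x hx ↦ ?_,
        (ModuleCat.epi_iff_surjective _).2 (Submodule.mkQ_surjective _)⟩
      obtain ⟨y, hy⟩ := Ideal.mem_span_singleton.1 ((Submodule.Quotient.mk_eq_zero _).1 hx)
      refine ⟨y, Eq.trans ?_ hy.symm⟩
      exact ConcreteCategory.congr_hom (h.chainComplex_d_of_even .zero) y
    | n + 1 => by
      rw [quasiIsoAt_iff_exactAt' _ _ (ChainComplex.exactAt_succ_single_obj _ _)]
      exact h.chainComplex_exactAt_succ n

/-- The periodic free resolution of `R ⧸ (a)` given by an exact pair `a`, `b`. -/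
noncomputable def projectiveResolution (h : IsExactPair a b) :
    ProjectiveResolution (ModuleCat.of R (R ⧸ Ideal.span {a})) where
  complex := h.chainComplex
  projective _ := inferInstanceAs (Projective (ModuleCat.of R R))
  π := h.augmentation
  quasiIso := h.quasiIso_augmentation

end IsExactPair

section Ext

open scoped Pointwise

/-- If the second map of a short complex of modules vanishes, its homology is the cokernel of the
first map. -/
noncomputable def homologyEquivOfEqZero {k : Type*} [Ring k] (S : ShortComplex (ModuleCat.{u} k))
    (hg : S.g = 0) : S.homology ≃ₗ[k] S.X₂ ⧸ S.f.hom.range :=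
  (ShortComplex.LeftHomologyData.ofIsColimitCokernelCofork S hg _
    (ModuleCat.cokernelIsColimit S.f)).homologyIso.toLinearEquiv

/-- The quotient of `R ⧸ (c)` by `a` is `R ⧸ (a, c)`. -/
noncomputable def quotSMulTopQuotientEquiv {R : Type*} [CommRing R] (a c : R) :
    QuotSMulTop a (R ⧸ Ideal.span {c}) ≃ₗ[R] R ⧸ Ideal.span {a, c} :=
  Submodule.quotEquivOfEq _ _ (by
    rw [← Submodule.range_mkQ (Ideal.span {c}), ← Submodule.map_top,
      ← Submodule.map_pointwise_smul]) ≪≫ₗ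
  Submodule.quotientQuotientEquivQuotientSup (Ideal.span {c}) (a • ⊤) ≪≫ₗ
  Submodule.quotEquivOfEq _ _ (by
    rw [← Submodule.ideal_span_singleton_smul, smul_eq_mul, Ideal.mul_top, Ideal.span_insert,
      sup_comm])

variable {k : Type*} {R M : Type u} [Field k] [CommRing R] [Algebra k R] [AddCommGroup M]
  [Module R M] [Module k M] [IsScalarTower k R M] {a b : R}

variable (k R M) in
/-- The `k`-module of morphisms `R ⟶ M` is `M`, by evaluation at `1`. -/
noncomputable def linearYonedaSelfEquiv :
    ((linearYoneda k (ModuleCat.{u} R)).obj (.of R M)).obj (.op (.of R R)) ≃ₗ[k] M where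
  toFun f := ModuleCat.Hom.hom f (1 : R)
  map_add' _ _ := rfl
  map_smul' c f := algebraMap_smul R c (ModuleCat.Hom.hom f (1 : R))
  invFun m := ModuleCat.ofHom (LinearMap.toSpanSingleton R M m)
  left_inv _ := ModuleCat.hom_ext (LinearMap.ext_ring (one_smul R _))
  right_inv m := one_smul R m

lemma linearYonedaSelfEquiv_smul_id_comp (c : R) (f : ModuleCat.of R R ⟶ ModuleCat.of R M) :
    linearYonedaSelfEquiv k R M ((c • 𝟙 _) ≫ f) = c • linearYonedaSelfEquiv k R M f := by
  rw [Linear.smul_comp, Category.id_comp]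
  rfl

namespace IsExactPair

lemma linearYonedaObj_d_of_odd (h : IsExactPair a b) (hM : ∀ m : M, b • m = 0) {n : ℕ}
    (hn : Odd n) : (h.chainComplex.linearYonedaObj k (.of R M)).d n (n + 1) = 0 := by
  ext f
  apply (linearYonedaSelfEquiv k R M).injective
  change linearYonedaSelfEquiv k R M (h.chainComplex.d (n + 1) n ≫ f) = _
  rw [h.chainComplex_d_of_odd hn]
  exact (linearYonedaSelfEquiv_smul_id_comp b f).trans (hM _)

lemma map_range_linearYonedaObj_d_of_even (h : IsExactPair a b) {n : ℕ} (hn : Even n) :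
    ((h.chainComplex.linearYonedaObj k (.of R M)).d n (n + 1)).hom.range.map
      (linearYonedaSelfEquiv k R M).toLinearMap = (a • (⊤ : Submodule R M)).restrictScalars k := by
  have d_apply (f : ModuleCat.of R R ⟶ ModuleCat.of R M) :
      linearYonedaSelfEquiv k R M (h.chainComplex.d (n + 1) n ≫ f) =
        a • linearYonedaSelfEquiv k R M f := by
    rw [h.chainComplex_d_of_even hn]
    exact linearYonedaSelfEquiv_smul_id_comp a f
  ext m
  simp only [Submodule.restrictScalars_mem, Submodule.mem_smul_pointwise_iff_exists]
  constructor
  · rintro ⟨_, ⟨f, rfl⟩, rfl⟩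
    exact ⟨_, trivial, (d_apply f).symm⟩
  · rintro ⟨m, -, rfl⟩
    refine ⟨_, ⟨(linearYonedaSelfEquiv k R M).symm m, rfl⟩, (d_apply _).trans ?_⟩
    rw [LinearEquiv.apply_symm_apply]

/-- For an exact pair `a`, `b`, the odd `Ext` groups of `R ⧸ (a)` with values in a module `M`
killed by `b` are `M ⧸ a M`. -/
noncomputable def extSuccEquivOfEven (h : IsExactPair a b) (hM : ∀ m : M, b • m = 0) {n : ℕ}
    (hn : Even n) :
    ((Ext k (ModuleCat.{u} R) (n + 1)).obj (.op (.of R (R ⧸ Ideal.span {a})))).obj (.of R M)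
      ≃ₗ[k] QuotSMulTop a M :=
  let C := h.chainComplex.linearYonedaObj k (ModuleCat.of R M)
  (h.projectiveResolution.isoExt (n + 1) (ModuleCat.of R M) ≪≫
    C.homologyIsoSc' n (n + 1) (n + 2) (by simp) (by simp)).toLinearEquiv ≪≫ₗ
  homologyEquivOfEqZero (C.sc' n (n + 1) (n + 2)) (h.linearYonedaObj_d_of_odd hM hn.add_one) ≪≫ₗ
  Submodule.Quotient.equiv _ _ (linearYonedaSelfEquiv k R M)
    (h.map_range_linearYonedaObj_d_of_even hn) ≪≫ₗ
  Submodule.Quotient.restrictScalarsEquiv k _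

/-- For an exact pair `a`, `b` and a divisor `c` of `b`, the odd `Ext` groups of `R ⧸ (a)` with
values in `R ⧸ (c)` are `R ⧸ (a, c)`. -/
noncomputable def extSuccQuotientEquivOfEven (h : IsExactPair a b) {c : R} (hc : c ∣ b) {n : ℕ}
    (hn : Even n) :
    ((Ext k (ModuleCat.{u} R) (n + 1)).obj (.op (.of R (R ⧸ Ideal.span {a})))).obj
      (.of R (R ⧸ Ideal.span {c})) ≃ₗ[k] R ⧸ Ideal.span {a, c} :=
  h.extSuccEquivOfEven (fun m ↦ by
    obtain ⟨x, rfl⟩ := Ideal.Quotient.mk_surjective m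
    exact (Ideal.Quotient.eq_zero_iff_dvd _ _).2 (hc.mul_right x)) hn ≪≫ₗ
  (quotSMulTopQuotientEquiv a c).restrictScalars k

end IsExactPair

end Ext

section Hypersurface

open nonZeroDivisors

lemma mk_span_mul_mul_eq_zero_iff {A : Type*} [CommRing A] {p q : A} (hp : p ∈ A⁰)
    (x : A ⧸ Ideal.span {p * q}) :
    Ideal.Quotient.mk _ p * x = 0 ↔ Ideal.Quotient.mk _ q ∣ x := by
  constructor
  · obtain ⟨x, rfl⟩ := Ideal.Quotient.mk_surjective x
    rw [← map_mul, Ideal.Quotient.eq_zero_iff_dvd, dvd_cancel_left_mem_nonZeroDivisors hp]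
    exact map_dvd _
  · rintro ⟨y, rfl⟩
    rw [← mul_assoc, ← map_mul, Ideal.Quotient.mk_singleton_self, zero_mul]

lemma isExactPair_mk_span_mul {A : Type*} [CommRing A] {p q : A} (hp : p ∈ A⁰) (hq : q ∈ A⁰) :
    IsExactPair (Ideal.Quotient.mk (Ideal.span {p * q}) p) (Ideal.Quotient.mk _ q) :=
  ⟨mk_span_mul_mul_eq_zero_iff hp, by
    rw [mul_comm p q]
    exact mk_span_mul_mul_eq_zero_iff hq⟩

/-- Over the hypersurface ring `R = A ⧸ (p * q * r)`, the odd `Ext` groups of `R ⧸ (p)` with values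
in `R ⧸ (q)` are `A ⧸ (p, q)`. -/
noncomputable def extSuccHypersurfaceEquivOfEven (k : Type*) {A : Type u} [Field k] [CommRing A]
    [Algebra k A] {p q r : A} (hp : p ∈ A⁰) (hqr : q * r ∈ A⁰) {n : ℕ} (hn : Even n) :
    letI I := Ideal.span {p * (q * r)}
    letI R := A ⧸ I
    ((Ext k (ModuleCat R) (n + 1)).obj
        (.op (.of R (R ⧸ Ideal.span {Ideal.Quotient.mk I p})))).obj
      (.of R (R ⧸ Ideal.span {Ideal.Quotient.mk I q})) ≃ₗ[k] A ⧸ Ideal.span {p, q} :=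
  (isExactPair_mk_span_mul hp hqr).extSuccQuotientEquivOfEven (map_dvd _ (dvd_mul_right q r)) hn ≪≫ₗ
  (Ideal.quotientEquivAlgOfEq k (by simp [Ideal.map_span, Set.image_pair])).toLinearEquiv ≪≫ₗ
  (DoubleQuot.quotQuotEquivQuotOfLEₐ k ((Ideal.span_singleton_le_iff_mem _).2
    (Ideal.mul_mem_right _ _ (Ideal.subset_span (.inl rfl))))).toLinearEquiv

end Hypersurface

/-- A surjection of algebras identifies quotients of the target with quotients of the source by
ideals containing the kernel. -/
noncomputable def quotientKerSupEquiv {k A B : Type*} [CommRing k] [CommRing A] [CommRing B]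
    [Algebra k A] [Algebra k B] {f : A →ₐ[k] B} (hf : Function.Surjective f) (I : Ideal A) :
    (A ⧸ RingHom.ker f ⊔ I) ≃ₐ[k] B ⧸ I.map f :=
  (Ideal.quotientEquivAlgOfEq k (by
    rw [sup_comm]
    refine (Ideal.comap_map_of_surjective' f hf I).symm.trans ?_
    ext x
    exact (Ideal.Quotient.eq_zero_iff_mem (I := I.map f)).symm)).trans
  (Ideal.quotientKerAlgEquivOfSurjective (f := (Ideal.Quotient.mkₐ k (I.map f)).comp f)
    ((Ideal.Quotient.mkₐ_surjective k _).comp hf))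

section Plane

open MvPolynomial

variable {k : Type u} [Field k]

/-- The restriction of polynomial functions on the plane to the axis `X 1 = 0`. -/
noncomputable def restrictToAxis : MvPolynomial (Fin 2) k →ₐ[k] Polynomial k :=
  aeval ![Polynomial.X, 0]

lemma restrictToAxis_surjective : Function.Surjective (restrictToAxis (k := k)) := by
  have comp_eq_id : restrictToAxis.comp (Polynomial.aeval (X 0)) = AlgHom.id k _ := by
    ext
    simp [restrictToAxis]
  exact Function.LeftInverse.surjective (DFunLike.congr_fun comp_eq_id)

lemma ker_restrictToAxis : RingHom.ker (restrictToAxis (k := k)) = Ideal.span {X 1} := by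
  apply le_antisymm
  · intro f hf
    have mk_comp_eq : (Ideal.Quotient.mkₐ k (Ideal.span {X (R := k) (1 : Fin 2)})).comp
        ((Polynomial.aeval (X 0)).comp restrictToAxis) = Ideal.Quotient.mkₐ k _ := by
      ext i
      fin_cases i <;> simp [restrictToAxis]
    have mk_eq := DFunLike.congr_fun mk_comp_eq f
    simp only [AlgHom.comp_apply, RingHom.mem_ker.1 hf, map_zero] at mk_eq
    exact Ideal.Quotient.eq_zero_iff_mem.1 mk_eq.symm
  · simp [restrictToAxis]

lemma finrank_quotient_span_X_one (g : MvPolynomial (Fin 2) k) :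
    Module.finrank k (MvPolynomial (Fin 2) k ⧸ Ideal.span {X 1, g}) =
      (restrictToAxis g).natDegree := by
  rw [← finrank_quotient_span_eq_natDegree, Ideal.span_insert, ← ker_restrictToAxis,
    (quotientKerSupEquiv restrictToAxis_surjective _).toLinearEquiv.finrank_eq, Ideal.map_span,
    Set.image_singleton]

theorem stmt_6_general {F g h : MvPolynomial (Fin 2) k}
    (hF : F = X 1 * (g * h)) (hg : restrictToAxis g ≠ 0) (hh : h ≠ 0) {n : ℕ} (hn : Even n) :
    letI R := MvPolynomial (Fin 2) k ⧸ Ideal.span {F}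
    Module.finrank k
      (((Ext k (ModuleCat R) (n + 1)).obj
          (.op (.of R (R ⧸ Ideal.span {Ideal.Quotient.mk (Ideal.span {F}) (X 1)})))).obj
        (.of R (R ⧸ Ideal.span {Ideal.Quotient.mk (Ideal.span {F}) g}))) =
      (restrictToAxis g).natDegree := by
  subst hF
  have hgh : g * h ≠ 0 := mul_ne_zero (ne_zero_of_map hg) hh
  rw [(extSuccHypersurfaceEquivOfEven k (mem_nonZeroDivisors_of_ne_zero (X_ne_zero 1))
    (mem_nonZeroDivisors_of_ne_zero hgh) hn).finrank_eq, finrank_quotient_span_X_one]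

end Plane

/-- Let `R = k[X,Y]/(F)`, `R₁ = R/z₁R` and `R₃₄ = R/z₃z₄R` (with `z₁ = Y`,
`z₃ = X − Y`, `z₄ = X − λY`).  Then `Ext¹_R(R₁, R₃₄)` is a 2-dimensional
`k`-vector space. -/
theorem stmt_6 {k : Type} [Field k] (lam : k) (h0 : lam ≠ 0) (h1 : lam ≠ 1)
    (F : MvPolynomial (Fin 2) k)
    (hF : F = MvPolynomial.X 0 * MvPolynomial.X 1 *
      (MvPolynomial.X 0 - MvPolynomial.X 1) *
      (MvPolynomial.X 0 - MvPolynomial.C lam * MvPolynomial.X 1)) :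
    letI R := MvPolynomial (Fin 2) k ⧸ Ideal.span {F}
    letI z1 : R := Ideal.Quotient.mk _ (MvPolynomial.X 1)
    letI z34 : R := Ideal.Quotient.mk _ ((MvPolynomial.X 0 - MvPolynomial.X 1) *
      (MvPolynomial.X 0 - MvPolynomial.C lam * MvPolynomial.X 1))
    Module.finrank k
      (((Ext k (ModuleCat R) 1).obj
          (Opposite.op (ModuleCat.of R (R ⧸ Ideal.span {z1})))).obj
        (ModuleCat.of R (R ⧸ Ideal.span {z34}))) = 2 := by
  exact (stmt_6_general (h := MvPolynomial.X 0) (by rw [hF]; ring) (by simp [restrictToAxis])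
    (MvPolynomial.X_ne_zero 0) .zero).trans (by simp [restrictToAxis, ← sq])
end

section
/- Fix n ≥ 1. Let Φ₂(n)⁺ be the (2n+1)×(2n+1) lower-triangular matrix over k[X,Y], with rows and columns indexed 0,…,2n, whose only nonzero entries are: (0,0) = z₃; (1,0) = −z₄, (1,1) = z₁z₄; for 1 ≤ j ≤ n: (2j, 2j−1) = −z₁z₃, (2j, 2j) = z₂z₃; and for 1 ≤ j ≤ n−1: (2j+1, 2j−1) = z₁z₄, (2j+1, 2j) = −z₂z₄, (2j+1, 2j+1) = z₁z₄. Then det Φ₂(n)⁺ = z₁ⁿ z₂ⁿ z₃ⁿ⁺¹ z₄ⁿ, and there exists a (2n+1)×(2n+1) matrix Ψ with entries in k[X,Y] such that Φ₂(n)⁺·Ψ = Ψ·Φ₂(n)⁺ = F·I₂ₙ₊₁. -/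
/-!
Every nonzero entry of `Φ₂(n)⁺` is, up to sign, a factor depending only on its row (`z₃` or `z₄`,
alternately) times a factor depending only on its column (`1`, then `z₁` or `z₂`, alternately).
Extracting both writes `Φ₂(n)⁺` as diagonal · unipotent · diagonal. This gives the determinant.
The outer factors are halves of diagonal matrix factorizations of `z₃z₄` and `z₁z₂`, the unipotent
one is half of a matrix factorization of `1`, and matrix factorizations multiply.
-/

section MatrixFactorization

variable {ι R : Type*} [Fintype ι] [DecidableEq ι]

/-- The pair `(A, B)` is a matrix factorization of `f`. Both products are required, and `f` may be
any scalar, zero divisors and units included. -/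
def IsMatrixFactorization [CommSemiring R] (f : R) (A B : Matrix ι ι R) : Prop :=
  A * B = f • (1 : Matrix ι ι R) ∧ B * A = f • (1 : Matrix ι ι R)

theorem IsMatrixFactorization.mul [CommSemiring R] {f g : R} {A B C D : Matrix ι ι R}
    (hAB : IsMatrixFactorization f A B) (hCD : IsMatrixFactorization g C D) :
    IsMatrixFactorization (f * g) (A * C) (D * B) := by
  constructor
  · calc A * C * (D * B) = A * (C * D) * B := by simp only [Matrix.mul_assoc]
      _ = g • (A * B) := by simp only [hCD.1, Matrix.mul_smul, Matrix.smul_mul, Matrix.mul_one]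
      _ = (f * g) • (1 : Matrix ι ι R) := by rw [hAB.1, smul_smul, mul_comm]
  · calc D * B * (A * C) = D * (B * A) * C := by simp only [Matrix.mul_assoc]
      _ = f • (D * C) := by simp only [hAB.2, Matrix.mul_smul, Matrix.smul_mul, Matrix.mul_one]
      _ = (f * g) • (1 : Matrix ι ι R) := by rw [hCD.2, smul_smul]

theorem isMatrixFactorization_diagonal [CommSemiring R] {f : R} {d e : ι → R}
    (hde : ∀ i, d i * e i = f) :
    IsMatrixFactorization f (Matrix.diagonal d) (Matrix.diagonal e) := by
  have hed (i : ι) : e i * d i = f := by rw [mul_comm, hde]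
  simp only [IsMatrixFactorization, Matrix.diagonal_mul_diagonal, hde, hed,
    Matrix.smul_one_eq_diagonal, and_self]

theorem isMatrixFactorization_one_inv [CommRing R] {A : Matrix ι ι R} (hA : IsUnit A.det) :
    IsMatrixFactorization 1 A A⁻¹ := by
  simp only [IsMatrixFactorization, Matrix.mul_nonsing_inv A hA, Matrix.nonsing_inv_mul A hA,
    one_smul, and_self]

end MatrixFactorization

section DiagonalFactors

variable {M : Type*}

/-- The sequence `a, b, a, b, …`, indexed from `0`; it gives the row and column factors of
`Φ₂(n)⁺`. -/
def alternating (a b : M) (i : ℕ) : M :=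
  if Even i then a else b

theorem alternating_mul_alternating_swap [CommMagma M] (a b : M) (i : ℕ) :
    alternating a b i * alternating b a i = a * b := by
  unfold alternating
  split_ifs
  · rfl
  · exact mul_comm b a

theorem prod_range_two_mul_alternating [CommMonoid M] (a b : M) (n : ℕ) :
    ∏ i ∈ Finset.range (2 * n), alternating a b i = a ^ n * b ^ n := by
  induction n with
  | zero => simp
  | succ n ih =>
    have h_even : alternating a b (2 * n) = a := if_pos (even_two_mul n)
    have h_odd : alternating a b (2 * n + 1) = b := if_neg (by simp)
    rw [Nat.mul_succ, Finset.prod_range_succ, Finset.prod_range_succ, ih, h_even, h_odd,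
      pow_succ, pow_succ, mul_assoc, mul_mul_mul_comm]

/-- The row factors `z₃, z₄, z₃, …, z₃` of `Φ₂(n)⁺`. -/
def rowFactor (z3 z4 : M) (n : ℕ) (i : Fin (2 * n + 1)) : M :=
  alternating z3 z4 i

/-- The column factors `a, z₁, z₂, z₁, …, z₂`: those of `Φ₂(n)⁺` for `a = 1`, and the complementary
ones for `a = z₁z₂` after exchanging `z₁` and `z₂`. -/
def columnFactor (a z1 z2 : M) (n : ℕ) : Fin (2 * n + 1) → M :=
  Fin.cons a fun j : Fin (2 * n) => alternating z1 z2 j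

theorem rowFactor_mul_rowFactor_swap [CommMagma M] (z3 z4 : M) (n : ℕ) (i : Fin (2 * n + 1)) :
    rowFactor z3 z4 n i * rowFactor z4 z3 n i = z3 * z4 :=
  alternating_mul_alternating_swap z3 z4 i

theorem columnFactor_mul_columnFactor_swap [CommMonoid M] (z1 z2 : M) (n : ℕ)
    (j : Fin (2 * n + 1)) :
    columnFactor 1 z1 z2 n j * columnFactor (z1 * z2) z2 z1 n j = z1 * z2 := by
  cases j using Fin.cases with
  | zero => exact one_mul _
  | succ j => exact alternating_mul_alternating_swap z1 z2 j

theorem prod_rowFactor [CommMonoid M] (z3 z4 : M) (n : ℕ) :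
    ∏ i, rowFactor z3 z4 n i = z3 ^ (n + 1) * z4 ^ n := by
  have h_last : alternating z3 z4 (2 * n) = z3 := if_pos (even_two_mul n)
  simp only [rowFactor]
  rw [← Finset.prod_range, Finset.prod_range_succ, prod_range_two_mul_alternating, h_last,
    pow_succ, mul_right_comm]

theorem prod_columnFactor [CommMonoid M] (a z1 z2 : M) (n : ℕ) :
    ∏ j, columnFactor a z1 z2 n j = a * (z1 ^ n * z2 ^ n) := by
  rw [columnFactor, Fin.prod_cons, ← Finset.prod_range, prod_range_two_mul_alternating]

end DiagonalFactors

section RelationMatrix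

variable {R : Type*} [CommRing R]

/-- The matrix `Φ₂(n)⁺` over an arbitrary commutative ring, with `z₁, …, z₄` arbitrary elements.
The truncated subtractions `i - 1` and `i - 2` are only reached for `2 ≤ i` and `3 ≤ i`. -/
def relationMatrix (z1 z2 z3 z4 : R) (n : ℕ) :
    Matrix (Fin (2 * n + 1)) (Fin (2 * n + 1)) R :=
  Matrix.of fun i j =>
    if i.val = 0 then (if j.val = 0 then z3 else 0)
    else if i.val = 1 then
      (if j.val = 0 then -z4 else if j.val = 1 then z1 * z4 else 0)
    else if i.val % 2 = 0 then
      (if j.val = i.val - 1 then -(z1 * z3)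
       else if j.val = i.val then z2 * z3 else 0)
    else
      (if j.val = i.val - 2 then z1 * z4
       else if j.val = i.val - 1 then -(z2 * z4)
       else if j.val = i.val then z1 * z4 else 0)

variable (R) in
/-- The unipotent matrix left over from `Φ₂(n)⁺` (of size `m = 2n + 1`) after extracting the row
and column factors. -/
def unipotentCore (m : ℕ) : Matrix (Fin m) (Fin m) R :=
  Matrix.of fun i j =>
    if j.val = i.val then 1
    else if j.val + 1 = i.val then -1
    else if j.val + 2 = i.val ∧ Odd i.val then 1
    else 0

theorem det_unipotentCore (m : ℕ) : (unipotentCore R m).det = 1 := by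
  have h_lower : (unipotentCore R m).IsLowerTriangular := by
    intro i j hij
    have hij' : i.val < j.val := hij
    simp only [unipotentCore, Matrix.of_apply]
    rw [if_neg (by omega), if_neg (by omega), if_neg (by omega)]
  rw [Matrix.det_of_isLowerTriangular _ h_lower]
  exact Finset.prod_eq_one fun i _ => if_pos rfl

theorem relationMatrix_eq_diagonal_mul_mul_diagonal (z1 z2 z3 z4 : R) (n : ℕ) :
    relationMatrix z1 z2 z3 z4 n =
      Matrix.diagonal (rowFactor z3 z4 n) * unipotentCore R (2 * n + 1) *
        Matrix.diagonal (columnFactor 1 z1 z2 n) := by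
  ext i j
  rw [Matrix.mul_diagonal, Matrix.diagonal_mul]
  simp only [relationMatrix, unipotentCore, rowFactor, Matrix.of_apply]
  cases j using Fin.cases with
  | zero =>
    simp only [columnFactor, alternating, Fin.cons_zero, Fin.val_zero, Nat.even_iff, Nat.odd_iff]
    grind
  | succ j =>
    simp only [columnFactor, alternating, Fin.cons_succ, Fin.val_succ, Nat.even_iff, Nat.odd_iff]
    grind

theorem det_relationMatrix (z1 z2 z3 z4 : R) (n : ℕ) :
    (relationMatrix z1 z2 z3 z4 n).det = z1 ^ n * z2 ^ n * z3 ^ (n + 1) * z4 ^ n := by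
  rw [relationMatrix_eq_diagonal_mul_mul_diagonal, Matrix.det_mul, Matrix.det_mul,
    Matrix.det_diagonal, Matrix.det_diagonal, det_unipotentCore, prod_rowFactor, prod_columnFactor]
  ring

theorem exists_isMatrixFactorization_relationMatrix (z1 z2 z3 z4 : R) (n : ℕ) :
    ∃ Ψ, IsMatrixFactorization (z1 * z2 * z3 * z4) (relationMatrix z1 z2 z3 z4 n) Ψ := by
  have h_row : IsMatrixFactorization (z3 * z4) (Matrix.diagonal (rowFactor z3 z4 n))
      (Matrix.diagonal (rowFactor z4 z3 n)) :=
    isMatrixFactorization_diagonal (rowFactor_mul_rowFactor_swap z3 z4 n)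
  have h_core : IsMatrixFactorization 1 (unipotentCore R (2 * n + 1))
      (unipotentCore R (2 * n + 1))⁻¹ :=
    isMatrixFactorization_one_inv (by rw [det_unipotentCore]; exact isUnit_one)
  have h_column : IsMatrixFactorization (z1 * z2) (Matrix.diagonal (columnFactor 1 z1 z2 n))
      (Matrix.diagonal (columnFactor (z1 * z2) z2 z1 n)) :=
    isMatrixFactorization_diagonal (columnFactor_mul_columnFactor_swap z1 z2 n)
  have h_scalar : z1 * z2 * z3 * z4 = z3 * z4 * 1 * (z1 * z2) := by ring
  rw [relationMatrix_eq_diagonal_mul_mul_diagonal, h_scalar]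
  exact ⟨_, (h_row.mul h_core).mul h_column⟩

theorem stmt_12_general (z1 z2 z3 z4 : R) (n : ℕ) :
    (relationMatrix z1 z2 z3 z4 n).det = z1 ^ n * z2 ^ n * z3 ^ (n + 1) * z4 ^ n ∧
      ∃ Ψ, IsMatrixFactorization (z1 * z2 * z3 * z4) (relationMatrix z1 z2 z3 z4 n) Ψ :=
  ⟨det_relationMatrix z1 z2 z3 z4 n, exists_isMatrixFactorization_relationMatrix z1 z2 z3 z4 n⟩

end RelationMatrix

/-- For `n ≥ 1`, the `(2n+1)×(2n+1)` matrix of relations `Φ₂(n)⁺` of `M₂(n)⁺` has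
determinant `z₁ⁿz₂ⁿz₃ⁿ⁺¹z₄ⁿ` and is part of a matrix factorization of `F`. -/
theorem stmt_12 {k : Type*} [Field k] (lam : k) (h0 : lam ≠ 0) (h1 : lam ≠ 1)
    (z1 z2 z3 z4 F : MvPolynomial (Fin 2) k)
    (hz1 : z1 = MvPolynomial.X 1) (hz2 : z2 = MvPolynomial.X 0)
    (hz3 : z3 = MvPolynomial.X 0 - MvPolynomial.X 1)
    (hz4 : z4 = MvPolynomial.X 0 - MvPolynomial.C lam * MvPolynomial.X 1)
    (hF : F = z1 * z2 * z3 * z4)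
    (n : ℕ) (hn : 1 ≤ n)
    (Φ : Matrix (Fin (2 * n + 1)) (Fin (2 * n + 1)) (MvPolynomial (Fin 2) k))
    (hΦ : ∀ i j : Fin (2 * n + 1), Φ i j =
      if i.val = 0 then (if j.val = 0 then z3 else 0)
      else if i.val = 1 then
        (if j.val = 0 then -z4 else if j.val = 1 then z1 * z4 else 0)
      else if i.val % 2 = 0 then
        (if j.val = i.val - 1 then -(z1 * z3)
         else if j.val = i.val then z2 * z3 else 0)
      else
        (if j.val = i.val - 2 then z1 * z4
         else if j.val = i.val - 1 then -(z2 * z4)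
         else if j.val = i.val then z1 * z4 else 0)) :
    Φ.det = z1 ^ n * z2 ^ n * z3 ^ (n + 1) * z4 ^ n ∧
    ∃ Ψ : Matrix (Fin (2 * n + 1)) (Fin (2 * n + 1)) (MvPolynomial (Fin 2) k),
      Φ * Ψ = F • (1 : Matrix (Fin (2 * n + 1)) (Fin (2 * n + 1)) (MvPolynomial (Fin 2) k)) ∧
      Ψ * Φ = F • (1 : Matrix (Fin (2 * n + 1)) (Fin (2 * n + 1)) (MvPolynomial (Fin 2) k)) := by
  obtain rfl : Φ = relationMatrix z1 z2 z3 z4 n := Matrix.ext hΦ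
  exact hF ▸ stmt_12_general z1 z2 z3 z4 n
end
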